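/- Let G be a graph on n vertices and let 1/2 ≤ α ≤ 1. Then for every k with 1 ≤ k ≤ n, S_k(A_α(G)) ≥ α·S_k(Q(G)) + (1−2α)·S_k(A(G)), where Q(G) = D(G) + A(G) is the signless Laplacian matrix of G. -/

import Mathlib

open Matrix Finset Real

/-- The `A_α`-matrix of a graph: `A_α(G) = α·D(G) + (1−α)·A(G)`. -/
noncomputable def Aalpha {n : ℕ} (α : ℝ) (G : SimpleGraph (Fin n)) [DecidableRel G.Adj] :
    Matrix (Fin n) (Fin n) ℝ :=
  α • Matrix.diagonal (fun i => (G.degree i : ℝ)) + (1 - α) • G.adjMatrix ℝ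

/-- The sum of the `k` largest eigenvalues of a real symmetric matrix, expressed as
the supremum over all `k`-subsets of indices of the corresponding eigenvalue sums. -/
noncomputable def Sk {n : ℕ} (M : Matrix (Fin n) (Fin n) ℝ) (k : ℕ) : ℝ :=
  if h : M.IsHermitian then
    sSup {x : ℝ | ∃ s : Finset (Fin n), s.card = k ∧ x = ∑ i ∈ s, h.eigenvalues i}
  else 0

/-- The signless Laplacian matrix `Q(G) = D(G) + A(G)`. -/
noncomputable def Qmat {n : ℕ} (G : SimpleGraph (Fin n)) [DecidableRel G.Adj] :
    Matrix (Fin n) (Fin n) ℝ :=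
  Matrix.diagonal (fun i => (G.degree i : ℝ)) + G.adjMatrix ℝ

/-!
By Ky Fan's maximum principle, the sum `S_k(M)` of the `k` largest eigenvalues of a Hermitian matrix
is the maximum of `∑ re ⟪v i, M v i⟫` over orthonormal `k`-tuples `v`, so `S_k` is subadditive and
positively homogeneous. Apply this to `α Q = A_α + (2α - 1) A`, where `2α - 1 ≥ 0`.

For the maximum principle, expand the `v i` in an orthonormal eigenbasis `u`: the sum becomes
`∑ λ_j w_j` with `w_j = ∑ i, |⟪v i, u j⟫|²`. Bessel's inequality and Parseval's identity give
`0 ≤ w_j ≤ 1` and `∑ w_j = k`, and the best such weights are indicators of `k`-sets.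
-/

section TopSum

variable {ι : Type*}

/-- The sum of the `k` largest values of a finite family `f` of real numbers; it is the junk value
`sSup ∅ = 0` when `k` exceeds the number of indices. -/
noncomputable def topSum (f : ι → ℝ) (k : ℕ) : ℝ :=
  sSup {x : ℝ | ∃ s : Finset ι, s.card = k ∧ x = ∑ i ∈ s, f i}

lemma finite_setOf_eq_sum_of_card_eq [Finite ι] (f : ι → ℝ) (k : ℕ) :
    {x : ℝ | ∃ s : Finset ι, s.card = k ∧ x = ∑ i ∈ s, f i}.Finite := by
  refine (Set.finite_range fun s : Finset ι => ∑ i ∈ s, f i).subset ?_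
  rintro x ⟨s, -, rfl⟩
  exact ⟨s, rfl⟩

lemma sum_le_topSum [Finite ι] (f : ι → ℝ) (s : Finset ι) : ∑ i ∈ s, f i ≤ topSum f s.card :=
  le_csSup (finite_setOf_eq_sum_of_card_eq f s.card).bddAbove ⟨s, rfl, rfl⟩

lemma exists_card_eq_and_topSum_eq_sum [Fintype ι] (f : ι → ℝ) {k : ℕ}
    (hk : k ≤ Fintype.card ι) : ∃ s : Finset ι, s.card = k ∧ topSum f k = ∑ i ∈ s, f i := by
  obtain ⟨s, -, hs⟩ := exists_subset_card_eq (s := (univ : Finset ι)) hk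
  have hne : {x : ℝ | ∃ s : Finset ι, s.card = k ∧ x = ∑ i ∈ s, f i}.Nonempty := ⟨_, s, hs, rfl⟩
  exact hne.csSup_mem (finite_setOf_eq_sum_of_card_eq f k)

lemma le_of_topSum_eq_sum [Finite ι] {f : ι → ℝ} {s : Finset ι}
    (hs : topSum f s.card = ∑ i ∈ s, f i) {i j : ι} (hi : i ∈ s) (hj : j ∉ s) : f j ≤ f i := by
  classical
  have hj' : j ∉ s.erase i := mt mem_of_mem_erase hj
  have hcard : (insert j (s.erase i)).card = s.card := by
    rw [card_insert_of_notMem hj', card_erase_add_one hi]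
  have hswap := sum_le_topSum f (insert j (s.erase i))
  rw [hcard, hs, sum_insert hj', ← add_sum_erase s f hi] at hswap
  exact le_of_add_le_add_right hswap

lemma exists_threshold_of_forall_le {β : Type*} [LinearOrder β] [Nonempty β] [Finite ι]
    {f : ι → β} {s : Finset ι} (h : ∀ i ∈ s, ∀ j ∉ s, f j ≤ f i) :
    ∃ c, (∀ i ∈ s, c ≤ f i) ∧ ∀ j ∉ s, f j ≤ c := by
  rcases s.eq_empty_or_nonempty with rfl | hs
  · obtain ⟨c, hc⟩ := (Set.finite_range f).bddAbove
    exact ⟨c, by simp, fun j _ => hc ⟨j, rfl⟩⟩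
  · obtain ⟨m, hm, hmin⟩ := s.exists_min_image f hs
    exact ⟨f m, hmin, h m hm⟩

lemma sum_mul_le_topSum [Fintype ι] (f : ι → ℝ) {w : ι → ℝ} {k : ℕ} (hw0 : ∀ j, 0 ≤ w j)
    (hw1 : ∀ j, w j ≤ 1) (hwk : ∑ j, w j = k) : ∑ j, f j * w j ≤ topSum f k := by
  classical
  have hk : k ≤ Fintype.card ι := by
    have : ∑ j, w j ≤ ∑ _j : ι, (1 : ℝ) := sum_le_sum fun j _ => hw1 j
    rw [hwk, sum_const, card_univ, nsmul_one] at this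
    exact_mod_cast this
  obtain ⟨s, rfl, hs⟩ := exists_card_eq_and_topSum_eq_sum f hk
  obtain ⟨c, hcs, hsc⟩ := exists_threshold_of_forall_le fun _ hi _ hj =>
    le_of_topSum_eq_sum hs hi hj
  have hpoint : ∀ j, (f j - c) * w j ≤ if j ∈ s then f j - c else 0 := by
    intro j
    split_ifs with hj
    · exact mul_le_of_le_one_right (sub_nonneg.2 (hcs j hj)) (hw1 j)
    · exact mul_nonpos_of_nonpos_of_nonneg (sub_nonpos.2 (hsc j hj)) (hw0 j)
  calc ∑ j, f j * w j = ∑ j, (f j - c) * w j + c * s.card := by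
        rw [← hwk, mul_sum, ← sum_add_distrib]
        exact sum_congr rfl fun j _ => by ring
    _ ≤ (∑ j, if j ∈ s then f j - c else 0) + c * s.card := by
        gcongr with j
        exact hpoint j
    _ = ∑ j ∈ s, f j := by
        rw [sum_ite_mem, univ_inter, sum_sub_distrib, sum_const, nsmul_eq_mul]
        ring
    _ = topSum f s.card := hs.symm

end TopSum

section KyFan

variable {𝕜 E ι : Type*} [RCLike 𝕜] [NormedAddCommGroup E] [InnerProductSpace 𝕜 E] [Fintype ι]
  {T : E →ₗ[𝕜] E} {u : OrthonormalBasis ι 𝕜 E} {f : ι → ℝ}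

lemma re_inner_map_self_eq_sum (hT : ∀ j, T (u j) = (f j : 𝕜) • u j) (x : E) :
    RCLike.re (inner 𝕜 x (T x)) = ∑ j, f j * ‖inner 𝕜 x (u j)‖ ^ 2 := by
  have hTx : T x = ∑ j, inner 𝕜 (u j) x • (f j : 𝕜) • u j := by
    conv_lhs => rw [← u.sum_repr' x]
    simp only [map_sum, map_smul, hT]
  rw [hTx, inner_sum, map_sum]
  refine sum_congr rfl fun j _ => ?_
  rw [inner_smul_right, inner_smul_right, mul_left_comm, RCLike.re_ofReal_mul,
    inner_mul_symm_re_eq_norm, norm_mul, norm_inner_symm (u j) x, sq]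

lemma sum_re_inner_map_self_le_topSum (hT : ∀ j, T (u j) = (f j : 𝕜) • u j) {κ : Type*}
    [Fintype κ] {v : κ → E} (hv : Orthonormal 𝕜 v) :
    ∑ i, RCLike.re (inner 𝕜 (v i) (T (v i))) ≤ topSum f (Fintype.card κ) := by
  calc ∑ i, RCLike.re (inner 𝕜 (v i) (T (v i)))
      = ∑ j, f j * ∑ i, ‖inner 𝕜 (v i) (u j)‖ ^ 2 := by
        simp only [re_inner_map_self_eq_sum hT, mul_sum]
        exact sum_comm
    _ ≤ topSum f (Fintype.card κ) := by
        refine sum_mul_le_topSum f (fun j => by positivity) (fun j => ?_) ?_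
        · simpa only [u.norm_eq_one, one_pow] using hv.sum_inner_products_le (u j) (s := univ)
        · rw [sum_comm]
          simp only [u.sum_sq_norm_inner_left, hv.norm_eq_one, one_pow, sum_const, card_univ,
            nsmul_one]

theorem isGreatest_topSum_of_orthonormalBasis (hT : ∀ j, T (u j) = (f j : 𝕜) • u j)
    {k : ℕ} (hk : k ≤ Fintype.card ι) :
    IsGreatest {x : ℝ | ∃ v : Fin k → E, Orthonormal 𝕜 v ∧
      x = ∑ i, RCLike.re (inner 𝕜 (v i) (T (v i)))} (topSum f k) := by
  constructor
  · obtain ⟨s, rfl, hs⟩ := exists_card_eq_and_topSum_eq_sum f hk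
    let e := s.equivFin.symm
    refine ⟨fun i => u (e i), u.orthonormal.comp _ (Subtype.val_injective.comp e.injective), ?_⟩
    calc topSum f s.card = ∑ j : s, f j := hs.trans (sum_coe_sort s f).symm
      _ = ∑ i, f (e i) := (e.sum_comp fun j : s => f j).symm
      _ = ∑ i, RCLike.re (inner 𝕜 (u (e i)) (T (u (e i)))) := by
        simp only [hT, inner_smul_right, RCLike.re_ofReal_mul, inner_self_eq_norm_sq,
          u.norm_eq_one, one_pow, mul_one]
  · rintro x ⟨v, hv, rfl⟩
    simpa only [Fintype.card_fin] using sum_re_inner_map_self_le_topSum hT hv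

end KyFan

section Hermitian

variable {𝕜 n : Type*} [RCLike 𝕜] [Fintype n] [DecidableEq n] {M N : Matrix n n 𝕜} {k : ℕ}

lemma toEuclideanLin_eigenvectorBasis (hM : M.IsHermitian) (j : n) :
    M.toEuclideanLin (hM.eigenvectorBasis j) =
      (hM.eigenvalues j : 𝕜) • hM.eigenvectorBasis j := by
  rw [← RCLike.real_smul_eq_coe_smul, toLpLin_apply, hM.mulVec_eigenvectorBasis]
  rfl

theorem isGreatest_topSum_eigenvalues (hM : M.IsHermitian) (hk : k ≤ Fintype.card n) :
    IsGreatest {x : ℝ | ∃ v : Fin k → EuclideanSpace 𝕜 n, Orthonormal 𝕜 v ∧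
      x = ∑ i, RCLike.re (inner 𝕜 (v i) (M.toEuclideanLin (v i)))}
      (topSum hM.eigenvalues k) :=
  isGreatest_topSum_of_orthonormalBasis (toEuclideanLin_eigenvectorBasis hM) hk

theorem topSum_eigenvalues_add_le (hM : M.IsHermitian) (hN : N.IsHermitian)
    (hk : k ≤ Fintype.card n) :
    topSum (hM.add hN).eigenvalues k ≤ topSum hM.eigenvalues k + topSum hN.eigenvalues k := by
  obtain ⟨v, hv, hsum⟩ := (isGreatest_topSum_eigenvalues (hM.add hN) hk).1
  simp only [hsum, map_add, LinearMap.add_apply, inner_add_right, sum_add_distrib]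
  exact add_le_add ((isGreatest_topSum_eigenvalues hM hk).2 ⟨v, hv, rfl⟩)
    ((isGreatest_topSum_eigenvalues hN hk).2 ⟨v, hv, rfl⟩)

theorem topSum_eigenvalues_smul (hM : M.IsHermitian) {c : ℝ} (hc : 0 ≤ c)
    (hk : k ≤ Fintype.card n) :
    topSum (hM.smul (IsSelfAdjoint.all c)).eigenvalues k = c * topSum hM.eigenvalues k := by
  have hgM := isGreatest_topSum_eigenvalues hM hk
  have hgcM := isGreatest_topSum_eigenvalues (hM.smul (IsSelfAdjoint.all c)) hk
  have hsmul (v : Fin k → EuclideanSpace 𝕜 n) :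
      ∑ i, RCLike.re (inner 𝕜 (v i) ((c • M).toEuclideanLin (v i))) =
        c * ∑ i, RCLike.re (inner 𝕜 (v i) (M.toEuclideanLin (v i))) := by
    simp only [RCLike.real_smul_eq_coe_smul (K := 𝕜) c M, map_smul, LinearMap.smul_apply,
      inner_smul_right, RCLike.re_ofReal_mul, mul_sum]
  apply le_antisymm
  · obtain ⟨v, hv, hsum⟩ := hgcM.1
    rw [hsum, hsmul]
    exact mul_le_mul_of_nonneg_left (hgM.2 ⟨v, hv, rfl⟩) hc
  · obtain ⟨v, hv, hsum⟩ := hgM.1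
    rw [hsum, ← hsmul]
    exact hgcM.2 ⟨v, hv, rfl⟩

end Hermitian

section Sk

variable {n k : ℕ} {M N : Matrix (Fin n) (Fin n) ℝ}

lemma Sk_eq_topSum_eigenvalues (hM : M.IsHermitian) (k : ℕ) :
    Sk M k = topSum hM.eigenvalues k :=
  dif_pos hM

lemma Sk_add_le (hM : M.IsHermitian) (hN : N.IsHermitian) (hk : k ≤ n) :
    Sk (M + N) k ≤ Sk M k + Sk N k := by
  simpa only [Sk_eq_topSum_eigenvalues, hM, hN, hM.add hN]
    using topSum_eigenvalues_add_le hM hN (hk.trans_eq (Fintype.card_fin n).symm)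

lemma Sk_smul (hM : M.IsHermitian) {c : ℝ} (hc : 0 ≤ c) (hk : k ≤ n) :
    Sk (c • M) k = c * Sk M k := by
  rw [Sk_eq_topSum_eigenvalues hM, Sk_eq_topSum_eigenvalues (hM.smul (IsSelfAdjoint.all c)),
    topSum_eigenvalues_smul hM hc (hk.trans_eq (Fintype.card_fin n).symm)]

end Sk

section Graph

variable {n : ℕ} (G : SimpleGraph (Fin n)) [DecidableRel G.Adj] (α : ℝ)

lemma isHermitian_Qmat : (Qmat G).IsHermitian :=
  (G.isHermitian_degMatrix ℝ).add (G.isHermitian_adjMatrix ℝ)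

lemma isHermitian_Aalpha : (Aalpha α G).IsHermitian :=
  ((G.isHermitian_degMatrix ℝ).smul (IsSelfAdjoint.all α)).add
    ((G.isHermitian_adjMatrix ℝ).smul (IsSelfAdjoint.all (1 - α)))

lemma smul_Qmat : α • Qmat G = Aalpha α G + (2 * α - 1) • G.adjMatrix ℝ := by
  rw [Qmat, Aalpha]
  module

end Graph

theorem stmt14_general {n : ℕ} (G : SimpleGraph (Fin n)) [DecidableRel G.Adj]
    (α : ℝ) (hα : 1 / 2 ≤ α) (k : ℕ) (hkn : k ≤ n) :
    Sk (Aalpha α G) k ≥ α * Sk (Qmat G) k + (1 - 2 * α) * Sk (G.adjMatrix ℝ) k := by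
  have hα0 : 0 ≤ α := by linarith
  have hα1 : 0 ≤ 2 * α - 1 := by linarith
  have hA := G.isHermitian_adjMatrix ℝ
  have hle : α * Sk (Qmat G) k ≤ Sk (Aalpha α G) k + (2 * α - 1) * Sk (G.adjMatrix ℝ) k :=
    calc α * Sk (Qmat G) k
        = Sk (Aalpha α G + (2 * α - 1) • G.adjMatrix ℝ) k := by
          rw [← Sk_smul (isHermitian_Qmat G) hα0 hkn, smul_Qmat]
      _ ≤ Sk (Aalpha α G) k + Sk ((2 * α - 1) • G.adjMatrix ℝ) k :=
          Sk_add_le (isHermitian_Aalpha G α) (hA.smul (IsSelfAdjoint.all _)) hkn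
      _ = Sk (Aalpha α G) k + (2 * α - 1) * Sk (G.adjMatrix ℝ) k := by rw [Sk_smul hA hα1 hkn]
  linarith

theorem stmt14 {n : ℕ} (G : SimpleGraph (Fin n)) [DecidableRel G.Adj]
    (α : ℝ) (hα0 : 1 / 2 ≤ α) (hα1 : α ≤ 1)
    (k : ℕ) (hk1 : 1 ≤ k) (hkn : k ≤ n) :
    Sk (Aalpha α G) k ≥ α * Sk (Qmat G) k + (1 - 2 * α) * Sk (G.adjMatrix ℝ) k :=
  stmt14_general G α hα0 k hkn
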